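/- Let p be a non-degenerate behaviour in a scenario S = (X, C, O), and let f be a coupling on O^{X̃} of the family (p^C_x)_{(x,C)∈X̃} such that for every x ∈ X the marginal f_{T(x)} is a maximal coupling of the family (p^C_x)_{C∈C_x}. Then f(v) = 0 for every v ∈ O^{X̃} that is not of the form ũ for some u ∈ O^X (where ũ(x_C) = u(x)), and consequently f is the trivial extension of a unique probability distribution q on O^X; moreover, if additionally the marginal of f on each C̃ equals p^C, then q is a global section of p, so p is non-contextual in the standard sense. -/

import Mathlib

def IsDist {α : Type} [Fintype α] (f : α → ℝ) : Prop :=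
  (∀ a, 0 ≤ f a) ∧ ∑ a, f a = 1

def coordMarg {O I : Type} [Fintype O] [DecidableEq O] [Fintype I] [DecidableEq I]
    (q : (I → O) → ℝ) (i : I) : O → ℝ :=
  fun o => ∑ v : I → O, if v i = o then q v else 0

def margAlong {O I J : Type} [Fintype O] [DecidableEq O] [Fintype I] [DecidableEq I] [Fintype J]
    (e : J → I) (q : (I → O) → ℝ) : (J → O) → ℝ :=
  fun t => ∑ v : I → O, if ∀ j, v (e j) = t j then q v else 0

def diagWeight {O J : Type} [Fintype O] [Fintype J] (q : (J → O) → ℝ) : ℝ :=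
  ∑ o : O, q (fun _ => o)

def IsCoupling {O J : Type} [Fintype O] [DecidableEq O] [Fintype J] [DecidableEq J]
    (q : (J → O) → ℝ) (r : J → O → ℝ) : Prop :=
  IsDist q ∧ ∀ j : J, coordMarg q j = r j

def IsMaxCoupling {O J : Type} [Fintype O] [DecidableEq O] [Fintype J] [DecidableEq J]
    (q : (J → O) → ℝ) (r : J → O → ℝ) : Prop :=
  IsCoupling q r ∧ ∀ q' : (J → O) → ℝ, IsCoupling q' r → diagWeight q' ≤ diagWeight q

def marg {X O : Type} [DecidableEq X] [Fintype O] [DecidableEq O] (E E' : Finset X)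
    (h : E' ⊆ E) (f : (↥E → O) → ℝ) : (↥E' → O) → ℝ :=
  margAlong (fun x : ↥E' => (⟨x.1, h x.2⟩ : ↥E)) f

def Cx {X : Type} [DecidableEq X] (𝒞 : Finset (Finset X)) (x : X) : Finset (Finset X) :=
  𝒞.filter (fun C => x ∈ C)

abbrev XT {X : Type} [DecidableEq X] (𝒞 : Finset (Finset X)) : Type :=
  {i : X × Finset X // i.2 ∈ 𝒞 ∧ i.1 ∈ i.2}

def eC {X : Type} [DecidableEq X] (𝒞 : Finset (Finset X)) (C : Finset X) (hC : C ∈ 𝒞) :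
    ↥C → XT 𝒞 :=
  fun x => ⟨(x.1, C), hC, x.2⟩

def eT {X : Type} [DecidableEq X] (𝒞 : Finset (Finset X)) (x : X) : ↥(Cx 𝒞 x) → XT 𝒞 :=
  fun C => ⟨(x, C.1), (Finset.mem_filter.mp C.2).1, (Finset.mem_filter.mp C.2).2⟩

def famAt {X O : Type} [DecidableEq X] [Fintype O] [DecidableEq O]
    (𝒞 : Finset (Finset X)) (p : ∀ C : Finset X, (↥C → O) → ℝ) (x : X) :
    ↥(Cx 𝒞 x) → O → ℝ :=
  fun C => coordMarg (p C.1) ⟨x, (Finset.mem_filter.mp C.2).2⟩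

def IsGlobalSection {X O : Type} [Fintype X] [DecidableEq X] [Fintype O] [DecidableEq O]
    (𝒞 : Finset (Finset X)) (p : ∀ C : Finset X, (↥C → O) → ℝ) (q : (X → O) → ℝ) : Prop :=
  IsDist q ∧ ∀ C ∈ 𝒞, p C = margAlong (fun x : ↥C => (x : X)) q

def NonDeg {X O : Type} [DecidableEq X] [Fintype O] [DecidableEq O]
    (𝒞 : Finset (Finset X)) (p : ∀ C : Finset X, (↥C → O) → ℝ) : Prop :=
  ∀ (x : X) (C D : Finset X), C ∈ 𝒞 → D ∈ 𝒞 → ∀ (hxC : x ∈ C) (hxD : x ∈ D),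
    coordMarg (p C) ⟨x, hxC⟩ = coordMarg (p D) ⟨x, hxD⟩

def ExtNC {X O : Type} [Fintype X] [DecidableEq X] [Fintype O] [DecidableEq O]
    (𝒞 : Finset (Finset X)) (p : ∀ C : Finset X, (↥C → O) → ℝ) : Prop :=
  ∃ q : (XT 𝒞 → O) → ℝ,
    IsCoupling q (fun i : XT 𝒞 => coordMarg (p i.1.2) ⟨i.1.1, i.2.2⟩) ∧
    (∀ (C : Finset X) (hC : C ∈ 𝒞), margAlong (eC 𝒞 C hC) q = p C) ∧
    (∀ x : X, IsMaxCoupling (margAlong (eT 𝒞 x) q) (famAt 𝒞 p x))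

open scoped Classical in
noncomputable def trivExt {X O : Type} [Fintype X] [DecidableEq X] [Fintype O] [DecidableEq O]
    (𝒞 : Finset (Finset X)) (q : (X → O) → ℝ) : (XT 𝒞 → O) → ℝ :=
  fun v => if h : ∃ u : X → O, ∀ i : XT 𝒞, v i = u i.1.1 then q h.choose else 0

/-!
Copying coordinate `j₀` of any coupling to all the other coordinates gives a coupling carried by the
diagonal, provided that the coupled distributions coincide. Hence a maximal coupling of equal
distributions vanishes off the diagonal. Applied to the fibres `T(x)`, this forces `f` to vanish at
every `v` that is not constant on each `T(x)`, that is, not of the form `ũ`. As `ũ` is `u` composed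
with the projection `x_C ↦ x`, a trivial extension is a marginal along that projection, and
functoriality of marginals then turns the marginal of `f` on `C̃` into that of `q` on `C`.
-/

section Marginals

variable {O I J K : Type} [Fintype O] [DecidableEq O] [Fintype I] [DecidableEq I]
  [Fintype J] [Fintype K]

theorem margAlong_apply (e : J → I) (q : (I → O) → ℝ) (t : J → O) :
    margAlong e q t = ∑ v : I → O, if v ∘ e = t then q v else 0 := by
  simp only [margAlong, funext_iff, Function.comp_apply]

theorem margAlong_nonneg (e : J → I) {q : (I → O) → ℝ} (hq : ∀ v, 0 ≤ q v) (t : J → O) :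
    0 ≤ margAlong e q t :=
  Finset.sum_nonneg fun v _ => ite_nonneg (hq v) le_rfl

theorem le_margAlong_comp (e : J → I) {q : (I → O) → ℝ} (hq : ∀ v, 0 ≤ q v) (v : I → O) :
    q v ≤ margAlong e q (v ∘ e) := by
  rw [margAlong_apply]
  calc q v = if v ∘ e = v ∘ e then q v else 0 := (if_pos rfl).symm
    _ ≤ ∑ w : I → O, if w ∘ e = v ∘ e then q w else 0 :=
      Finset.single_le_sum (f := fun w => if w ∘ e = v ∘ e then q w else 0)
        (fun w _ => ite_nonneg (hq w) le_rfl) (Finset.mem_univ v)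

theorem margAlong_comp_of_surjective {e : J → I} (he : e.Surjective) (q : (I → O) → ℝ)
    (v : I → O) : margAlong e q (v ∘ e) = q v := by
  simp only [margAlong_apply, he.injective_comp_right.eq_iff, Finset.sum_ite_eq', Finset.mem_univ,
    if_true]

theorem margAlong_eq_zero_of_notMem_range {e : J → I} (q : (I → O) → ℝ) {t : J → O}
    (ht : t ∉ Set.range fun v : I → O => v ∘ e) : margAlong e q t = 0 := by
  rw [margAlong_apply]
  exact Finset.sum_eq_zero fun v _ => if_neg fun hv => ht ⟨v, hv⟩

theorem margAlong_comp_eq_self {e : J → I} (he : e.Surjective) {f : (J → O) → ℝ}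
    (hf : ∀ t ∉ Set.range fun v : I → O => v ∘ e, f t = 0) :
    margAlong e (fun v => f (v ∘ e)) = f := by
  funext t
  by_cases ht : t ∈ Set.range fun v : I → O => v ∘ e
  · obtain ⟨v, rfl⟩ := ht
    exact margAlong_comp_of_surjective he _ v
  · rw [hf t ht, margAlong_eq_zero_of_notMem_range _ ht]

variable [DecidableEq J]

theorem sum_ite_margAlong (e : J → I) (q : (I → O) → ℝ) (P : (J → O) → Prop) [DecidablePred P] :
    (∑ t, if P t then margAlong e q t else 0) = ∑ v, if P (v ∘ e) then q v else 0 := by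
  simp only [margAlong_apply, ← Finset.sum_filter]
  rw [Finset.sum_comm' (t' := {v | P (v ∘ e)}) (s' := fun v => {v ∘ e})]
  · simp only [Finset.sum_singleton]
  · simp only [Finset.mem_filter_univ, Finset.mem_singleton]
    grind

theorem sum_margAlong (e : J → I) (q : (I → O) → ℝ) : ∑ t, margAlong e q t = ∑ v, q v := by
  simpa only [if_true] using sum_ite_margAlong e q fun _ => True

theorem coordMarg_margAlong (e : J → I) (q : (I → O) → ℝ) (j : J) :
    coordMarg (margAlong e q) j = coordMarg q (e j) :=
  funext fun o => sum_ite_margAlong e q fun t => t j = o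

theorem margAlong_margAlong (e : J → I) (e' : K → J) (q : (I → O) → ℝ) :
    margAlong e' (margAlong e q) = margAlong (e ∘ e') q :=
  funext fun s => sum_ite_margAlong e q fun t => ∀ k, t (e' k) = s k

protected theorem IsDist.margAlong (e : J → I) {q : (I → O) → ℝ} (hq : IsDist q) :
    IsDist (margAlong e q) :=
  ⟨margAlong_nonneg e hq.1, (sum_margAlong e q).trans hq.2⟩

theorem IsDist.existsUnique_eq_margAlong {e : J → I} (he : e.Surjective) {f : (J → O) → ℝ}
    (hf : IsDist f) (hsupp : ∀ t ∉ Set.range fun v : I → O => v ∘ e, f t = 0) :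
    ∃! q : (I → O) → ℝ, IsDist q ∧ f = margAlong e q := by
  have hself := margAlong_comp_eq_self he hsupp
  refine ⟨fun v => f (v ∘ e), ⟨⟨fun v => hf.1 _, ?_⟩, hself.symm⟩, ?_⟩
  · rw [← sum_margAlong e, hself, hf.2]
  · rintro q ⟨-, rfl⟩
    exact funext fun v => (margAlong_comp_of_surjective he q v).symm

end Marginals

section MaxCouplings

variable {O I J : Type} [Fintype O] [Fintype J] [Nonempty J]

theorem IsDist.eq_zero_of_one_le_diagWeight [DecidableEq J] {q : (J → O) → ℝ} (hq : IsDist q)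
    (hdiag : 1 ≤ diagWeight q) {t : J → O} (ht : t ∉ Set.range (Function.const J)) : q t = 0 := by
  classical
  have hnotMem : t ∉ Finset.univ.image (Function.const J) := by simpa using ht
  have hle : q t + diagWeight q ≤ 1 := calc
    q t + diagWeight q = ∑ s ∈ insert t (Finset.univ.image (Function.const J)), q s := by
      rw [Finset.sum_insert hnotMem, Finset.sum_image Function.const_injective.injOn]
      rfl
    _ ≤ ∑ s, q s := Finset.sum_le_univ_sum_of_nonneg hq.1
    _ = 1 := hq.2
  linarith [hq.1 t]

variable [DecidableEq O]

theorem diagWeight_margAlong_const [Fintype I] [DecidableEq I] (q : (I → O) → ℝ) (i : I) :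
    diagWeight (margAlong (fun _ : J => i) q) = ∑ v, q v := by
  simp only [diagWeight, margAlong, forall_const]
  rw [Finset.sum_comm]
  simp only [Finset.sum_ite_eq, Finset.mem_univ, if_true]

variable [DecidableEq J]

theorem IsMaxCoupling.one_le_diagWeight {q : (J → O) → ℝ} {r : J → O → ℝ}
    (hq : IsMaxCoupling q r) (hr : ∀ j k, r j = r k) : 1 ≤ diagWeight q := by
  obtain ⟨⟨hdist, hmarg⟩, hmax⟩ := hq
  let j₀ : J := Classical.arbitrary J
  have hcoup : IsCoupling (margAlong (fun _ : J => j₀) q) r := by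
    refine ⟨hdist.margAlong _, fun j => ?_⟩
    rw [coordMarg_margAlong, hmarg, hr]
  calc 1 = diagWeight (margAlong (fun _ : J => j₀) q) := by
        rw [diagWeight_margAlong_const, hdist.2]
    _ ≤ diagWeight q := hmax _ hcoup

theorem IsMaxCoupling.eq_zero_of_notMem_range_const {q : (J → O) → ℝ} {r : J → O → ℝ}
    (hq : IsMaxCoupling q r) (hr : ∀ j k, r j = r k) {t : J → O}
    (ht : t ∉ Set.range (Function.const J)) : q t = 0 :=
  hq.1.1.eq_zero_of_one_le_diagWeight (hq.one_le_diagWeight hr) ht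

end MaxCouplings

section Scenarios

variable {X O : Type} [DecidableEq X] {𝒞 : Finset (Finset X)}

/-- The projection `x_C ↦ x` from `X̃` to `X`, in terms of which `ũ` is `u ∘ XT.proj 𝒞`. -/
def XT.proj (𝒞 : Finset (Finset X)) : XT 𝒞 → X := fun i => i.1.1

theorem XT.proj_surjective (hcover : ∀ x : X, ∃ C ∈ 𝒞, x ∈ C) : (XT.proj 𝒞).Surjective := fun x =>
  let ⟨C, hC, hx⟩ := hcover x
  ⟨⟨(x, C), hC, hx⟩, rfl⟩

theorem mem_range_comp_proj_iff {v : XT 𝒞 → O} :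
    v ∈ Set.range (fun u : X → O => u ∘ XT.proj 𝒞) ↔ ∃ u : X → O, ∀ i : XT 𝒞, v i = u i.1.1 :=
  exists_congr fun _ => eq_comm.trans funext_iff

theorem mem_range_comp_proj_of_forall_comp_eT {v : XT 𝒞 → O}
    (hv : ∀ x, v ∘ eT 𝒞 x ∈ Set.range (Function.const (Cx 𝒞 x))) :
    v ∈ Set.range fun u : X → O => u ∘ XT.proj 𝒞 := by
  choose u hu using hv
  exact ⟨u, funext fun i => congrFun (hu i.1.1) ⟨i.1.2, Finset.mem_filter.mpr i.2⟩⟩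

variable [Fintype O] [DecidableEq O] {p : ∀ C : Finset X, (↥C → O) → ℝ}

theorem NonDeg.famAt_eq (hndg : NonDeg 𝒞 p) (x : X) (C D : Cx 𝒞 x) :
    famAt 𝒞 p x C = famAt 𝒞 p x D :=
  hndg x C D (Finset.mem_filter.mp C.2).1 (Finset.mem_filter.mp D.2).1 _ _

variable [Fintype X]

theorem trivExt_eq_margAlong (hcover : ∀ x : X, ∃ C ∈ 𝒞, x ∈ C) (q : (X → O) → ℝ) :
    trivExt 𝒞 q = margAlong (XT.proj 𝒞) q := by
  funext v
  by_cases hv : ∃ u : X → O, ∀ i : XT 𝒞, v i = u i.1.1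
  · have hv_eq : v = hv.choose ∘ XT.proj 𝒞 := funext hv.choose_spec
    calc trivExt 𝒞 q v = q hv.choose := dif_pos hv
      _ = margAlong (XT.proj 𝒞) q (hv.choose ∘ XT.proj 𝒞) :=
        (margAlong_comp_of_surjective (XT.proj_surjective hcover) q _).symm
      _ = margAlong (XT.proj 𝒞) q v := by rw [← hv_eq]
  · rw [margAlong_eq_zero_of_notMem_range q (mt mem_range_comp_proj_iff.mp hv)]
    exact dif_neg hv

theorem NonDeg.eq_zero_of_notMem_range_comp_proj (hndg : NonDeg 𝒞 p)
    (hcover : ∀ x : X, ∃ C ∈ 𝒞, x ∈ C) {f : (XT 𝒞 → O) → ℝ} (hf : ∀ v, 0 ≤ f v)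
    (hmax : ∀ x : X, IsMaxCoupling (margAlong (eT 𝒞 x) f) (famAt 𝒞 p x)) {v : XT 𝒞 → O}
    (hv : v ∉ Set.range fun u : X → O => u ∘ XT.proj 𝒞) : f v = 0 := by
  obtain ⟨x, hx⟩ := not_forall.mp (mt mem_range_comp_proj_of_forall_comp_eT hv)
  obtain ⟨C, hC, hxC⟩ := hcover x
  have : Nonempty (Cx 𝒞 x) := ⟨⟨C, Finset.mem_filter.mpr ⟨hC, hxC⟩⟩⟩
  have hmarg : margAlong (eT 𝒞 x) f (v ∘ eT 𝒞 x) = 0 :=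
    (hmax x).eq_zero_of_notMem_range_const (hndg.famAt_eq x) hx
  exact le_antisymm (hmarg ▸ le_margAlong_comp (eT 𝒞 x) hf v) (hf v)

theorem isGlobalSection_of_margAlong_eC_margAlong_proj {q : (X → O) → ℝ} (hq : IsDist q)
    (hmarg : ∀ (C : Finset X) (hC : C ∈ 𝒞),
      margAlong (eC 𝒞 C hC) (margAlong (XT.proj 𝒞) q) = p C) :
    IsGlobalSection 𝒞 p q := by
  refine ⟨hq, fun C hC => ?_⟩
  rw [← hmarg C hC, margAlong_margAlong]
  rfl

theorem coupling_of_nonDegenerate_is_trivExt_general (hcover : ∀ x : X, ∃ C ∈ 𝒞, x ∈ C)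
    (hndg : NonDeg 𝒞 p) {f : (XT 𝒞 → O) → ℝ} (hf : IsDist f)
    (hmax : ∀ x : X, IsMaxCoupling (margAlong (eT 𝒞 x) f) (famAt 𝒞 p x)) :
    (∀ v : XT 𝒞 → O, (¬ ∃ u : X → O, ∀ i : XT 𝒞, v i = u i.1.1) → f v = 0) ∧
    (∃! q : (X → O) → ℝ, IsDist q ∧ f = trivExt 𝒞 q) ∧
    ((∀ (C : Finset X) (hC : C ∈ 𝒞), margAlong (eC 𝒞 C hC) f = p C) →
      ∀ q : (X → O) → ℝ, IsDist q ∧ f = trivExt 𝒞 q → IsGlobalSection 𝒞 p q) := by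
  have hsupp : ∀ v ∉ Set.range fun u : X → O => u ∘ XT.proj 𝒞, f v = 0 := fun _ =>
    hndg.eq_zero_of_notMem_range_comp_proj hcover hf.1 hmax
  simp only [trivExt_eq_margAlong hcover]
  refine ⟨fun v hv => hsupp v (mt mem_range_comp_proj_iff.mp hv),
    hf.existsUnique_eq_margAlong (XT.proj_surjective hcover) hsupp, ?_⟩
  rintro hmarg q ⟨hq, rfl⟩
  exact isGlobalSection_of_margAlong_eC_margAlong_proj hq hmarg

end Scenarios

/-- If `p` is non-degenerate and `f` is a coupling of the family
`(p^C_x)_{(x,C) ∈ X̃}` whose marginal on each `T(x)` is a maximal coupling of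
`(p^C_x)_{C ∈ 𝒞_x}`, then `f` vanishes outside the "diagonal copy" of `O^X` in
`O^{X̃}`, is the trivial extension of a unique probability distribution `q` on `O^X`,
and if moreover the marginal of `f` on each `C̃` equals `p^C` then any such `q` is a
global section of `p` (so `p` is standard-noncontextual). -/
theorem coupling_of_nonDegenerate_is_trivExt
    {X O : Type} [Fintype X] [DecidableEq X] [Fintype O] [DecidableEq O]
    (𝒞 : Finset (Finset X))
    (hcover : ∀ x : X, ∃ C ∈ 𝒞, x ∈ C)
    (hanti : ∀ C ∈ 𝒞, ∀ C' ∈ 𝒞, C' ⊆ C → C' = C)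
    (p : ∀ C : Finset X, (↥C → O) → ℝ)
    (hdist : ∀ C ∈ 𝒞, IsDist (p C))
    (hndg : NonDeg 𝒞 p)
    (f : (XT 𝒞 → O) → ℝ)
    (hcoup : IsCoupling f (fun i : XT 𝒞 => coordMarg (p i.1.2) ⟨i.1.1, i.2.2⟩))
    (hmax : ∀ x : X, IsMaxCoupling (margAlong (eT 𝒞 x) f) (famAt 𝒞 p x)) :
    (∀ v : XT 𝒞 → O, (¬ ∃ u : X → O, ∀ i : XT 𝒞, v i = u i.1.1) → f v = 0) ∧
    (∃! q : (X → O) → ℝ, IsDist q ∧ f = trivExt 𝒞 q) ∧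
    ((∀ (C : Finset X) (hC : C ∈ 𝒞), margAlong (eC 𝒞 C hC) f = p C) →
      ∀ q : (X → O) → ℝ, IsDist q ∧ f = trivExt 𝒞 q → IsGlobalSection 𝒞 p q) :=
  coupling_of_nonDegenerate_is_trivExt_general hcover hndg hcoup.1 hmax
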